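/- If a and b are linked by I over M, then every minimal member of Ass(M/IM) lies in the union of the minimal members of Ass(M/aM) and the minimal members of Ass(M/bM). -/

import Mathlib

open RingTheory.Sequence

/-- The colon submodule `N :_M a = {m ∈ M | a m ⊆ N}`. -/
def Submodule.colonBy {R M : Type*} [CommRing R] [AddCommGroup M] [Module R M]
    (N : Submodule R M) (a : Ideal R) : Submodule R M :=
  ⨅ r ∈ a, N.comap (LinearMap.lsmul R M r)
/-- `a` and `b` are linked by `I` over `M`: `I ⊆ a ∩ b` is generated by an `M`-regular
sequence, `aM ≠ M ≠ bM`, `IM :_M a = bM` and `IM :_M b = aM`. -/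
def Ideal.LinkedBy (R M : Type*) [CommRing R] [AddCommGroup M] [Module R M]
    (a b I : Ideal R) : Prop :=
  I ≤ a ⊓ b ∧
  (∃ rs : List R, I = Ideal.ofList rs ∧ RingTheory.Sequence.IsRegular M rs) ∧
  a • (⊤ : Submodule R M) ≠ ⊤ ∧ b • (⊤ : Submodule R M) ≠ ⊤ ∧
  (I • ⊤ : Submodule R M).colonBy a = b • (⊤ : Submodule R M) ∧
  (I • ⊤ : Submodule R M).colonBy b = a • (⊤ : Submodule R M)

/-- The set of minimal members of the associated primes of `M`. -/
def minAss (R M : Type*) [CommRing R] [AddCommGroup M] [Module R M] : Set (Ideal R) :=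
  {p ∈ associatedPrimes R M | ∀ q ∈ associatedPrimes R M, q ≤ p → q = p}

/-!
Since `aM = IM :_M b` and `bM = IM :_M a`, the product of the annihilators of `M/aM` and `M/bM`
kills `M/IM`, so an associated prime `p` of `M/IM` contains one of the two annihilators, hence an
associated prime `q` of the corresponding quotient. Passing from `M/N` to `M/(N :_M a)` creates no
new associated primes, so `q` is associated to `M/IM`, and minimality of `p` forces `q = p`.

No new associated primes appear because the annihilator of `x` in `M/(N :_M a)` is `N : ax`, which
for `ax` generated by `y₁, …, yₙ` is the intersection of the `N : yᵢ`; if its radical is prime, then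
it is the radical of one of them.
-/

section

variable {R M : Type*} [CommRing R] [AddCommGroup M] [Module R M]

theorem le_annihilator_quotient_iff {N : Submodule R M} {J : Ideal R} :
    J ≤ Module.annihilator R (M ⧸ N) ↔ J • (⊤ : Submodule R M) ≤ N := by
  rw [Submodule.smul_le]
  simp [SetLike.le_def, Submodule.annihilator_quotient, Submodule.mem_colon]

theorem associatedPrimes_quotient (N : Submodule R M) :
    associatedPrimes R (M ⧸ N) = N.associatedPrimes := by
  have colon_mk (x : M) :
      (⊥ : Submodule R (M ⧸ N)).colon {Submodule.Quotient.mk x} = N.colon {x} := by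
    ext r
    simp [← Submodule.Quotient.mk_smul]
  ext p
  simp [AssociatedPrimes.mem_iff, IsAssociatedPrime, Submodule.AssociatePrimes.mem_iff,
    Submodule.isAssociatedPrime_def, (Submodule.Quotient.mk_surjective N).exists, colon_mk]

theorem exists_radical_colon_singleton_eq {N P : Submodule R M} (hP : P.FG)
    (hprime : (N.colon (P : Set M)).radical.IsPrime) :
    ∃ x : M, (N.colon (P : Set M)).radical = (N.colon {x}).radical := by
  obtain ⟨s, rfl⟩ := hP
  have radical_colon_eq : (N.colon (Submodule.span R (s : Set M) : Set M)).radical =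
      s.inf fun x => (N.colon {x}).radical := by
    have colon_eq : N.colon (s : Set M) = s.inf fun x => N.colon {x} := by
      ext r
      simp [Submodule.mem_colon, Submodule.mem_finsetInf]
    rw [Submodule.colon_span, colon_eq, ← Ideal.radicalInfTopHom_apply, map_finset_inf]
    rfl
  rw [radical_colon_eq] at hprime ⊢
  obtain ⟨x, -, hx⟩ := Ideal.eq_inf_of_isPrime_inf hprime
  exact ⟨x, hx.symm⟩

theorem exists_mem_associatedPrimes_le [IsNoetherian R M] {p : Ideal R} (hp : p.IsPrime)
    (hle : Module.annihilator R M ≤ p) : ∃ q ∈ associatedPrimes R M, q ≤ p := by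
  obtain ⟨t, ht⟩ := Submodule.IsLasker.exists_isMinimalPrimaryDecomposition
    (Submodule.isLasker R M) (⊥ : Submodule R M)
  have inf_le : t.inf (fun Q => Q.colon Set.univ) ≤ p :=
    calc t.inf (fun Q => Q.colon Set.univ)
      _ = (t.inf id).colon Set.univ := (Submodule.colon_finsetInf t id).symm
      _ = Module.annihilator R M := by
        rw [ht.inf_eq, ← Submodule.top_coe (R := R), Submodule.bot_colon, Submodule.annihilator_top]
      _ ≤ p := hle
  obtain ⟨Q, hQ, hQp⟩ := hp.inf_le'.mp inf_le
  exact ⟨_, ht.mem_associatedPrimes hQ, hp.radical_le_iff.mpr hQp⟩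

theorem mem_colonBy {N : Submodule R M} {a : Ideal R} {m : M} :
    m ∈ N.colonBy a ↔ ∀ r ∈ a, r • m ∈ N := by
  simp [Submodule.colonBy]

theorem le_colonBy_iff {N P : Submodule R M} {a : Ideal R} : P ≤ N.colonBy a ↔ a • P ≤ N := by
  rw [Submodule.smul_le]
  simp only [SetLike.le_def, mem_colonBy]
  tauto

theorem colon_colonBy_singleton (N : Submodule R M) (a : Ideal R) (x : M) :
    (N.colonBy a).colon {x} = N.colon (a • Submodule.span R {x} : Submodule R M) := by
  ext r
  simp [mem_colonBy, Submodule.mem_colon, Submodule.mem_smul_span_singleton, smul_smul, mul_comm]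

theorem associatedPrimes_colonBy_subset [IsNoetherian R M] (N : Submodule R M) (a : Ideal R) :
    (N.colonBy a).associatedPrimes ⊆ N.associatedPrimes := by
  rintro _ ⟨hprime, x, rfl⟩
  rw [colon_colonBy_singleton] at hprime ⊢
  exact ⟨hprime, exists_radical_colon_singleton_eq (IsNoetherian.noetherian _) hprime⟩

theorem mem_minAss_of_annihilator_le {M' : Type*} [AddCommGroup M'] [Module R M']
    [IsNoetherian R M'] (hsub : associatedPrimes R M' ⊆ associatedPrimes R M) {p : Ideal R}
    (hp : p ∈ minAss R M) (hle : Module.annihilator R M' ≤ p) : p ∈ minAss R M' := by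
  obtain ⟨q, hq, hqp⟩ := exists_mem_associatedPrimes_le hp.1.isPrime hle
  obtain rfl := hp.2 q (hsub hq) hqp
  exact ⟨hq, fun r hr => hp.2 r (hsub hr)⟩

theorem mem_minAss_quotient_colonBy [IsNoetherian R M] {N : Submodule R M} {a p : Ideal R}
    (hp : p ∈ minAss R (M ⧸ N)) (hle : Module.annihilator R (M ⧸ N.colonBy a) ≤ p) :
    p ∈ minAss R (M ⧸ N.colonBy a) := by
  refine mem_minAss_of_annihilator_le ?_ hp hle
  simpa only [associatedPrimes_quotient] using associatedPrimes_colonBy_subset N a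

theorem annihilator_mul_annihilator_quotient_colonBy_le {N : Submodule R M} {a b : Ideal R}
    (h : N.colonBy b ≤ a • (⊤ : Submodule R M)) :
    Module.annihilator R (M ⧸ N.colonBy a) * Module.annihilator R (M ⧸ N.colonBy b) ≤
      Module.annihilator R (M ⧸ N) := by
  set A := Module.annihilator R (M ⧸ N.colonBy a)
  set B := Module.annihilator R (M ⧸ N.colonBy b)
  have hA : A • (⊤ : Submodule R M) ≤ N.colonBy a := le_annihilator_quotient_iff.mp le_rfl
  have hB : B • (⊤ : Submodule R M) ≤ N.colonBy b := le_annihilator_quotient_iff.mp le_rfl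
  rw [le_annihilator_quotient_iff]
  calc (A * B) • (⊤ : Submodule R M)
    _ = A • B • ⊤ := mul_smul A B ⊤
    _ ≤ A • a • ⊤ := Submodule.smul_mono le_rfl (hB.trans h)
    _ = a • A • ⊤ := smul_comm A a ⊤
    _ ≤ N := le_colonBy_iff.mp hA

theorem minAss_subset_of_linked_general [IsNoetherian R M] {N : Submodule R M} {a b : Ideal R}
    (h : N.colonBy b ≤ a • (⊤ : Submodule R M)) :
    minAss R (M ⧸ N) ⊆ minAss R (M ⧸ N.colonBy b) ∪ minAss R (M ⧸ N.colonBy a) := by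
  intro p hp
  have hle : Module.annihilator R (M ⧸ N) ≤ p :=
    Submodule.annihilator_top.ge.trans hp.1.annihilator_le
  rcases hp.1.isPrime.mul_le.mp
    ((annihilator_mul_annihilator_quotient_colonBy_le h).trans hle) with hle | hle
  · exact Or.inr (mem_minAss_quotient_colonBy hp hle)
  · exact Or.inl (mem_minAss_quotient_colonBy hp hle)

end

/-- If `a` and `b` are linked by `I` over `M`, then every minimal associated prime of
`M/IM` is a minimal associated prime of `M/aM` or of `M/bM`. -/
theorem minAss_subset_of_linked {R M : Type*} [CommRing R] [IsNoetherianRing R]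
    [AddCommGroup M] [Module R M] [Module.Finite R M]
    (a b I : Ideal R) (h : Ideal.LinkedBy R M a b I) :
    minAss R (M ⧸ (I • ⊤ : Submodule R M)) ⊆
      minAss R (M ⧸ (a • ⊤ : Submodule R M)) ∪ minAss R (M ⧸ (b • ⊤ : Submodule R M)) := by
  obtain ⟨-, -, -, -, hb, ha⟩ := h
  have hsub := minAss_subset_of_linked_general ha.le
  rwa [ha, hb] at hsub
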